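/- Let X be a Banach space and M, N two finite-dimensional closed subspaces of X with dim M = dim N. Define δ(M,N) = sup_{x∈M, ‖x‖=1} dist(x,N). If δ(M,N) < 1, then δ(N,M) ≤ δ(M,N) / (1 - δ(M,N)). -/

import Mathlib

/-!
For `y` in the unit sphere of `N` and `δ(M, N) < r < 1`, it suffices to find `x` in the unit sphere
of `M` within `r` of a multiple `a • y`: then `1 - r < |a|`, so `y` is within `r / (1 - r)` of
`a⁻¹ • x`. Convexity of balls gives a continuous `g` from the unit sphere of `M` to `N` with
`‖u - g u‖ < r`. As `dim (N / ℝy) < dim M`, the Borsuk-Ulam theorem gives `u` such that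
`(g u - g (-u)) / 2` is a multiple of `y`, and this multiple is within `r` of `u`.

Borsuk-Ulam is proved by algebra. By polynomial approximation it reduces to the statement that `n`
real forms of odd degrees in `n + 1` variables have a common nontrivial zero. After dehomogenizing
to `p i` of degree at most `D i`, the quotient of the polynomial ring by the ideal generated by the
`X i ^ D i + t * p i` has odd dimension `∏ i, D i` for all but countably many real `t`, and a real
algebra of odd dimension has a real point. Normalizing these points and letting `t` tend to infinity
gives the zero.
-/

open MvPolynomial Metric

section OddDimensionalAlgebra

lemma finrank_eq_add_of_exact {k V₁ V₂ V₃ : Type*} [DivisionRing k] [AddCommGroup V₁] [Module k V₁]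
    [AddCommGroup V₂] [Module k V₂] [FiniteDimensional k V₂] [AddCommGroup V₃] [Module k V₃]
    {f : V₁ →ₗ[k] V₂} {g : V₂ →ₗ[k] V₃} (hf : Function.Injective f) (hg : Function.Surjective g)
    (hfg : Function.Exact f g) :
    Module.finrank k V₂ = Module.finrank k V₁ + Module.finrank k V₃ := by
  rw [← g.finrank_range_add_finrank_ker, LinearMap.exact_iff.1 hfg,
    LinearMap.finrank_range_of_inj hf, LinearMap.range_eq_top.2 hg, finrank_top, add_comm]

lemma nonempty_algEquiv_real_of_odd_finrank (F : Type*) [Field F] [Algebra ℝ F]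
    [FiniteDimensional ℝ F] (hF : Odd (Module.finrank ℝ F)) : Nonempty (F ≃ₐ[ℝ] ℝ) := by
  refine (Real.nonempty_algEquiv_or F).resolve_right fun ⟨e⟩ ↦ ?_
  rw [e.toLinearEquiv.finrank_eq, Complex.finrank_real_complex] at hF
  exact absurd hF (by decide)

lemma nonempty_algHom_real_of_odd_finrank_quotient {B : Type*} [CommRing B] [Algebra ℝ B]
    [FiniteDimensional ℝ B] (P : Ideal B) [P.IsPrime] (hP : Odd (Module.finrank ℝ (B ⧸ P))) :
    Nonempty (B →ₐ[ℝ] ℝ) := by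
  let : Field (B ⧸ P) := fieldOfFiniteDimensional ℝ (B ⧸ P)
  obtain ⟨e⟩ := nonempty_algEquiv_real_of_odd_finrank (B ⧸ P) hP
  exact ⟨e.toAlgHom.comp (Ideal.Quotient.mkₐ ℝ P)⟩

/-- In a prime filtration of `M`, some quotient `B ⧸ P` has odd dimension. -/
lemma nonempty_algHom_real_of_odd_finrank_module {B : Type*} [CommRing B] [Algebra ℝ B]
    [FiniteDimensional ℝ B] (M : Type*) [AddCommGroup M] [Module B M] [hM : Module.Finite B M]
    [Module ℝ M] [IsScalarTower ℝ B M] (hodd : Odd (Module.finrank ℝ M)) :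
    Nonempty (B →ₐ[ℝ] ℝ) := by
  have : IsNoetherianRing B := .of_finite ℝ B
  revert hodd ‹IsScalarTower ℝ B M›
  revert ‹Module ℝ M›
  induction hM using IsNoetherianRing.induction_on_isQuotientEquivQuotientPrime B with
  | subsingleton N =>
    intro _ _ hodd
    simp [Module.finrank_zero_of_subsingleton] at hodd
  | quotient N P f =>
    intro _ _ hodd
    rw [(f.restrictScalars ℝ).finrank_eq] at hodd
    exact nonempty_algHom_real_of_odd_finrank_quotient P.asIdeal hodd
  | exact N₁ N₂ N₃ f g hf hg hfg h₁ h₃ =>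
    intro _ _ hodd
    let : Module ℝ N₁ := Module.compHom N₁ (algebraMap ℝ B)
    let : Module ℝ N₃ := Module.compHom N₃ (algebraMap ℝ B)
    have : IsScalarTower ℝ B N₁ := .of_compHom ..
    have : IsScalarTower ℝ B N₃ := .of_compHom ..
    have : FiniteDimensional ℝ N₂ := Module.Finite.trans B N₂
    rw [finrank_eq_add_of_exact (f := f.restrictScalars ℝ) (g := g.restrictScalars ℝ) hf hg hfg,
      Nat.odd_add] at hodd
    rcases Nat.even_or_odd (Module.finrank ℝ N₃) with heven | hodd₃
    · exact h₁ (hodd.2 heven)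
    · exact h₃ hodd₃

theorem nonempty_algHom_real_of_odd_finrank {B : Type*} [CommRing B] [Algebra ℝ B]
    [FiniteDimensional ℝ B] (hB : Odd (Module.finrank ℝ B)) : Nonempty (B →ₐ[ℝ] ℝ) :=
  nonempty_algHom_real_of_odd_finrank_module B hB

end OddDimensionalAlgebra

section PowSubst

variable {σ R : Type*} [Fintype σ] [CommRing R]

/-- The linear map replacing `X i ^ D i` by `G i`, where an exponent `c i` is split as
`D i * (c i / D i) + c i % D i`. If it is bijective then it maps the ideal generated by the
`X i ^ D i` onto the one generated by the `G i`, so that both quotients have the same dimension. -/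
noncomputable def powSubst (D : σ → ℕ) (G : σ → MvPolynomial σ R) :
    MvPolynomial σ R →ₗ[R] MvPolynomial σ R :=
  (basisMonomials σ R).constr R fun c ↦ ∏ i, X i ^ (c i % D i) * G i ^ (c i / D i)

variable (D : σ → ℕ)

lemma powSubst_monomial (G : σ → MvPolynomial σ R) (c : σ →₀ ℕ) (r : R) :
    powSubst D G (monomial c r) = C r * ∏ i, X i ^ (c i % D i) * G i ^ (c i / D i) := by
  have h := (basisMonomials σ R).constr_basis R
    (fun c ↦ ∏ i, X i ^ (c i % D i) * G i ^ (c i / D i)) c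
  rw [coe_basisMonomials] at h
  rw [← mul_one r, ← smul_eq_mul, ← smul_monomial, map_smul, smul_eq_mul, mul_one,
    ← smul_eq_C_mul, ← h, powSubst]

lemma powSubst_X_pow (q : MvPolynomial σ R) : powSubst D (fun i ↦ X i ^ D i) q = q := by
  induction q using MvPolynomial.induction_on' with
  | add p q hp hq => rw [map_add, hp, hq]
  | monomial c r =>
    simp_rw [powSubst_monomial, ← pow_mul, ← pow_add, Nat.mod_add_div]
    rw [monomial_eq, Finsupp.prod_fintype _ _ fun _ ↦ pow_zero _]

lemma powSubst_X_pow_mul (hD : ∀ i, 0 < D i) (G : σ → MvPolynomial σ R) (i : σ)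
    (q : MvPolynomial σ R) : powSubst D G (X i ^ D i * q) = G i * powSubst D G q := by
  classical
  induction q using MvPolynomial.induction_on' with
  | add p q hp hq => rw [mul_add, map_add, map_add, mul_add, hp, hq]
  | monomial c r =>
    rw [X_pow_eq_monomial, monomial_mul, one_mul, powSubst_monomial, powSubst_monomial,
      mul_left_comm, ← Finset.mul_prod_erase _ _ (Finset.mem_univ i),
      ← Finset.mul_prod_erase _ _ (Finset.mem_univ i)]
    have hne : ∀ j ∈ Finset.univ.erase i, (Finsupp.single i (D i) + c) j = c j := fun j hj ↦ by
      simp [Finset.ne_of_mem_erase hj]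
    rw [Finset.prod_congr rfl fun j hj ↦ by rw [hne j hj]]
    simp only [Finsupp.add_apply, Finsupp.single_eq_same, Nat.add_mod_left,
      Nat.add_div_left _ (hD i), pow_succ]
    ring

lemma map_powSubst {S : Type*} [CommRing S] (f : R →+* S) (G : σ → MvPolynomial σ R)
    (q : MvPolynomial σ R) :
    map f (powSubst D G q) = powSubst D (fun i ↦ map f (G i)) (map f q) := by
  induction q using MvPolynomial.induction_on' with
  | add p q hp hq => simp only [map_add, hp, hq]
  | monomial c r =>
    simp only [powSubst_monomial, map_monomial, map_mul, map_prod, map_pow, map_C, map_X]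

lemma totalDegree_powSubst_le {G : σ → MvPolynomial σ R} (hG : ∀ i, (G i).totalDegree ≤ D i)
    (q : MvPolynomial σ R) : (powSubst D G q).totalDegree ≤ q.totalDegree := by
  have hterm (r : R) (c : σ →₀ ℕ) : (powSubst D G (monomial c r)).totalDegree ≤ c.degree := by
    rw [powSubst_monomial, ← smul_eq_C_mul, Finsupp.degree_eq_sum]
    refine (totalDegree_smul_le _ _).trans <| (totalDegree_finsetProd _ _).trans <|
      Finset.sum_le_sum fun i _ ↦ ?_
    calc (X i ^ (c i % D i) * G i ^ (c i / D i)).totalDegree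
        ≤ (c i % D i) * 1 + (c i / D i) * D i := by
          refine (totalDegree_mul _ _).trans (add_le_add ?_ ?_)
          · exact by rw [X_pow_eq_monomial]; exact (totalDegree_monomial_le _ _).trans (by simp)
          · exact (totalDegree_pow _ _).trans (Nat.mul_le_mul_left _ (hG i))
      _ = c i := by rw [mul_one, Nat.mod_add_div']
  conv_lhs => rw [q.as_sum, map_sum]
  exact totalDegree_finsetSum_le fun c hc ↦ (hterm _ c).trans (le_totalDegree hc)

/-- The matrix of `powSubst D G` on monomials, truncated to the exponents in `s`. -/
noncomputable def powSubstMatrix (G : σ → MvPolynomial σ R) (s : Finset (σ →₀ ℕ)) :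
    Matrix s s R :=
  .of fun c c' ↦ coeff c.1 (powSubst D G (monomial c'.1 1))

lemma map_powSubstMatrix {S : Type*} [CommRing S] (f : R →+* S) (G : σ → MvPolynomial σ R)
    (s : Finset (σ →₀ ℕ)) :
    (powSubstMatrix D G s).map f = powSubstMatrix D (fun i ↦ map f (G i)) s := by
  ext c c'
  simp only [powSubstMatrix, Matrix.map_apply, Matrix.of_apply]
  rw [← coeff_map, map_powSubst, map_monomial, map_one]

lemma powSubstMatrix_X_pow [DecidableEq σ] (s : Finset (σ →₀ ℕ)) :
    powSubstMatrix D (fun i ↦ (X i : MvPolynomial σ R) ^ D i) s = 1 := by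
  ext c c'
  simp only [powSubstMatrix, Matrix.of_apply, powSubst_X_pow, coeff_monomial, Matrix.one_apply,
    Subtype.ext_iff, eq_comm]

lemma powSubstMatrix_mulVec_coeff (G : σ → MvPolynomial σ R) (q : MvPolynomial σ R) :
    (powSubstMatrix D G q.support).mulVec (fun c ↦ coeff c.1 q) =
      fun c ↦ coeff c.1 (powSubst D G q) := by
  have hq : powSubst D G q = ∑ c : q.support, coeff c.1 q • powSubst D G (monomial c.1 1) := by
    conv_lhs => rw [q.as_sum, map_sum, ← Finset.sum_coe_sort]
    simp only [← map_smul, smul_eq_mul, mul_one]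
  ext c
  rw [hq, coeff_sum]
  simp only [Matrix.mulVec, dotProduct, powSubstMatrix, Matrix.of_apply, coeff_smul, smul_eq_mul,
    mul_comm]

lemma injective_powSubst_of_det_ne_zero [IsDomain R] [DecidableEq σ] {G : σ → MvPolynomial σ R}
    (hdet : ∀ s, (powSubstMatrix D G s).det ≠ 0) : Function.Injective (powSubst D G) := by
  refine (injective_iff_map_eq_zero _).2 fun q hq ↦ ?_
  have hcoeff : (fun c : q.support ↦ coeff c.1 q) = 0 :=
    Matrix.eq_zero_of_mulVec_eq_zero (hdet q.support) <| by
      rw [powSubstMatrix_mulVec_coeff, hq]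
      rfl
  by_contra hne
  obtain ⟨c, hc⟩ := support_nonempty.2 hne
  exact mem_support_iff.1 hc (congrFun hcoeff ⟨c, hc⟩)

/-- Each truncated determinant is a polynomial in `t` with value `1` at `t = 0`. -/
lemma countable_not_injective_powSubst_X_pow_add [IsDomain R] (p : σ → MvPolynomial σ R) :
    {t : R | ¬ Function.Injective (powSubst D fun i ↦ X i ^ D i + C t * p i)}.Countable := by
  classical
  let G : σ → MvPolynomial σ (Polynomial R) :=
    fun i ↦ X i ^ D i + C Polynomial.X * map Polynomial.C (p i)
  have hG (t : R) (i : σ) : map (Polynomial.evalRingHom t) (G i) = X i ^ D i + C t * p i := by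
    have hC : (Polynomial.evalRingHom t).comp Polynomial.C = RingHom.id R :=
      RingHom.ext fun _ ↦ Polynomial.eval_C
    simp only [G, map_add, map_mul, map_pow, map_X, map_C, map_map, hC, map_id,
      Polynomial.coe_evalRingHom, Polynomial.eval_X]
  have heval (t : R) (s : Finset (σ →₀ ℕ)) : (powSubstMatrix D G s).det.eval t =
      (powSubstMatrix D (fun i ↦ X i ^ D i + C t * p i) s).det := by
    rw [← Polynomial.coe_evalRingHom, RingHom.map_det, RingHom.mapMatrix_apply, map_powSubstMatrix]
    simp only [hG]
  have hne (s : Finset (σ →₀ ℕ)) : (powSubstMatrix D G s).det ≠ 0 := fun h ↦ by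
    simpa [h, powSubstMatrix_X_pow] using heval 0 s
  refine (Set.countable_iUnion fun s ↦
    ((powSubstMatrix D G s).det.rootSet_finite R).countable).mono ?_
  intro t ht
  by_contra hroot
  refine ht (injective_powSubst_of_det_ne_zero D fun s hs ↦ hroot ?_)
  rw [← heval] at hs
  exact Set.mem_iUnion.2 ⟨s, Polynomial.mem_rootSet.2 ⟨hne s, by simpa using hs⟩⟩

end PowSubst

section Quotient

lemma surjective_powSubst_of_injective {σ k : Type*} [Fintype σ] [Field k] {D : σ → ℕ}
    {G : σ → MvPolynomial σ k} (hG : ∀ i, (G i).totalDegree ≤ D i)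
    (hinj : Function.Injective (powSubst D G)) : Function.Surjective (powSubst D G) := by
  intro q
  let V := restrictTotalDegree σ k q.totalDegree
  have hV : Set.MapsTo (powSubst D G) V V := fun r hr ↦
    (mem_restrictTotalDegree ..).2 <|
      (totalDegree_powSubst_le D hG r).trans <| (mem_restrictTotalDegree ..).1 hr
  have hsurj : Function.Surjective ((powSubst D G).restrict hV) :=
    LinearMap.injective_iff_surjective.1 fun _ _ h ↦
      Subtype.ext (hinj (congrArg Subtype.val h))
  obtain ⟨r, hr⟩ := hsurj ⟨q, (mem_restrictTotalDegree ..).2 le_rfl⟩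
  exact ⟨r, congrArg Subtype.val hr⟩

lemma mem_span_range_X_pow_iff {σ k : Type*} [CommRing k] {D : σ → ℕ} {q : MvPolynomial σ k} :
    q ∈ Ideal.span (Set.range fun i ↦ X i ^ D i) ↔
      ∀ c : σ →₀ ℕ, (∀ i, c i < D i) → coeff c q = 0 := by
  have hrange : (Set.range fun i ↦ (X i : MvPolynomial σ k) ^ D i) =
      (fun c ↦ monomial c 1) '' Set.range fun i ↦ Finsupp.single i (D i) := by
    rw [← Set.range_comp]
    simp only [Function.comp_def, X_pow_eq_monomial]
  rw [hrange, mem_ideal_span_monomial_image]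
  simp only [Set.exists_range_iff, Finsupp.single_le_iff, mem_support_iff]
  refine forall_congr' fun c ↦ ?_
  rw [not_imp_comm]
  push Not
  rfl

variable {σ k : Type*} [Fintype σ] [CommRing k] {D : σ → ℕ}

variable (k D) in
/-- The coefficients of the reduced monomials, those with exponents `c i < D i`, which form a basis
of the quotient by the ideal generated by the powers `X i ^ D i`. -/
noncomputable def reducedCoeff : MvPolynomial σ k →ₗ[k] (∀ i, Fin (D i)) → k :=
  LinearMap.pi fun a ↦ lcoeff k (Finsupp.equivFunOnFinite.symm fun i ↦ (a i : ℕ))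

lemma ker_reducedCoeff : LinearMap.ker (reducedCoeff k D) =
    (Ideal.span (Set.range fun i ↦ (X i : MvPolynomial σ k) ^ D i)).restrictScalars k := by
  ext q
  rw [Submodule.restrictScalars_mem, mem_span_range_X_pow_iff, LinearMap.mem_ker, funext_iff]
  refine ⟨fun h c hc ↦ ?_, fun h a ↦ h _ fun i ↦ (a i).2⟩
  rw [← Finsupp.equivFunOnFinite_symm_coe c]
  exact h fun i ↦ ⟨c i, hc i⟩

lemma surjective_reducedCoeff : Function.Surjective (reducedCoeff k D) := by
  classical
  intro v
  refine ⟨∑ a, monomial (Finsupp.equivFunOnFinite.symm fun i ↦ (a i : ℕ)) (v a), ?_⟩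
  ext b
  have hinj (a : ∀ i, Fin (D i)) : (Finsupp.equivFunOnFinite.symm fun i ↦ (a i : ℕ)) =
      (Finsupp.equivFunOnFinite.symm fun i ↦ (b i : ℕ)) ↔ a = b := by
    simp only [EmbeddingLike.apply_eq_iff_eq, funext_iff, Fin.ext_iff]
  simp [reducedCoeff, coeff_monomial, hinj]

variable (k D) in
lemma finrank_quotient_span_range_X_pow [Nontrivial k] :
    Module.finrank k
      (MvPolynomial σ k ⧸ Ideal.span (Set.range fun i ↦ (X i : MvPolynomial σ k) ^ D i)) =
        ∏ i, D i := by
  classical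
  have e := (Submodule.quotEquivOfEq _ _ (ker_reducedCoeff (k := k) (D := D)).symm).trans
    ((reducedCoeff k D).quotKerEquivOfSurjective surjective_reducedCoeff)
  rw [← (Submodule.Quotient.restrictScalarsEquiv k _).finrank_eq, e.finrank_eq,
    Module.finrank_fintype_fun_eq_card]
  simp

lemma map_span_range_X_pow {G : σ → MvPolynomial σ k}
    (hD : ∀ i, 0 < D i) (hsurj : Function.Surjective (powSubst D G)) :
    ((Ideal.span (Set.range fun i ↦ X i ^ D i)).restrictScalars k).map (powSubst D G) =
      (Ideal.span (Set.range G)).restrictScalars k := by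
  ext q
  simp only [Submodule.mem_map, Submodule.restrictScalars_mem, Ideal.mem_span_range_iff_exists_fun]
  constructor
  · rintro ⟨_, ⟨a, rfl⟩, rfl⟩
    refine ⟨fun i ↦ powSubst D G (a i), ?_⟩
    simp only [map_sum, mul_comm (a _), powSubst_X_pow_mul D hD, mul_comm (G _)]
  · rintro ⟨b, rfl⟩
    choose a ha using fun i ↦ hsurj (b i)
    refine ⟨_, ⟨a, rfl⟩, ?_⟩
    simp only [map_sum, mul_comm (a _), powSubst_X_pow_mul D hD, mul_comm (G _), ha]

lemma finrank_quotient_span_range [Nontrivial k] {G : σ → MvPolynomial σ k}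
    (hD : ∀ i, 0 < D i) (hbij : Function.Bijective (powSubst D G)) :
    Module.finrank k (MvPolynomial σ k ⧸ Ideal.span (Set.range G)) = ∏ i, D i := by
  have e := Submodule.Quotient.equiv _ _ (.ofBijective _ hbij) (map_span_range_X_pow hD hbij.2)
  rw [← finrank_quotient_span_range_X_pow k D,
    ← (Submodule.Quotient.restrictScalarsEquiv k _).finrank_eq, ← e.finrank_eq,
    (Submodule.Quotient.restrictScalarsEquiv k _).finrank_eq]

end Quotient

lemma totalDegree_aeval_le {σ τ R : Type*} [CommSemiring R] {f : σ → MvPolynomial τ R}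
    (hf : ∀ i, (f i).totalDegree ≤ 1) (p : MvPolynomial σ R) :
    (aeval f p).totalDegree ≤ p.totalDegree := by
  rw [aeval_def, eval₂_eq]
  refine totalDegree_finsetSum_le fun c hc ↦ ?_
  rw [← Algebra.smul_def]
  calc (coeff c p • ∏ i ∈ c.support, f i ^ c i).totalDegree
      ≤ ∑ i ∈ c.support, (f i ^ c i).totalDegree :=
        (totalDegree_smul_le _ _).trans (totalDegree_finsetProd _ _)
    _ ≤ ∑ i ∈ c.support, c i * 1 := Finset.sum_le_sum fun i _ ↦
        (totalDegree_pow _ _).trans (Nat.mul_le_mul_left _ (hf i))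
    _ ≤ p.totalDegree := by
        simp only [mul_one]
        exact le_totalDegree hc

lemma eval_smul_of_isHomogeneous {σ R : Type*} [CommSemiring R] {p : MvPolynomial σ R} {n : ℕ}
    (hp : p.IsHomogeneous n) (r : R) (x : σ → R) : eval (r • x) p = r ^ n * eval x p := by
  rw [eval_eq, eval_eq, Finset.mul_sum]
  refine Finset.sum_congr rfl fun c hc ↦ ?_
  have hdeg : ∑ i ∈ c.support, c i = n := (hp.degree_eq_sum_deg_support hc).symm
  simp only [Pi.smul_apply, smul_eq_mul, mul_pow, Finset.prod_mul_distrib,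
    Finset.prod_pow_eq_pow_sum, hdeg]
  ring

section RealZeros

theorem exists_eval_eq_zero_of_bijective_powSubst {σ : Type*} [Fintype σ] {D : σ → ℕ}
    (hD : ∀ i, Odd (D i)) {G : σ → MvPolynomial σ ℝ} (hbij : Function.Bijective (powSubst D G)) :
    ∃ x : σ → ℝ, ∀ i, eval x (G i) = 0 := by
  have hodd : Odd (Module.finrank ℝ (MvPolynomial σ ℝ ⧸ Ideal.span (Set.range G))) := by
    rw [finrank_quotient_span_range (fun i ↦ (hD i).pos) hbij]
    exact Finset.prod_induction _ Odd (fun _ _ ↦ Odd.mul) odd_one fun i _ ↦ hD i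
  have : FiniteDimensional ℝ (MvPolynomial σ ℝ ⧸ Ideal.span (Set.range G)) :=
    .of_finrank_pos hodd.pos
  obtain ⟨φ⟩ := nonempty_algHom_real_of_odd_finrank hodd
  let ψ : MvPolynomial σ ℝ →ₐ[ℝ] ℝ := φ.comp (Ideal.Quotient.mkₐ ℝ _)
  refine ⟨fun i ↦ ψ (X i), fun i ↦ ?_⟩
  have hψ : ψ (G i) = 0 := by
    have : Ideal.Quotient.mk (Ideal.span (Set.range G)) (G i) = 0 :=
      Ideal.Quotient.eq_zero_iff_mem.2 (Ideal.subset_span ⟨i, rfl⟩)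
    simp [ψ, this]
  rwa [aeval_unique ψ, aeval_eq_eval] at hψ


lemma exists_gt_exists_eval_eq_zero {σ : Type*} [Finite σ] {D : σ → ℕ} (hD : ∀ i, Odd (D i))
    {p : σ → MvPolynomial σ ℝ} (hp : ∀ i, (p i).totalDegree ≤ D i) (a : ℝ) :
    ∃ t > a, ∃ x : σ → ℝ, ∀ i, x i ^ D i + t * eval x (p i) = 0 := by
  have := Fintype.ofFinite σ
  obtain ⟨t, ht, hat⟩ :=
    ((countable_not_injective_powSubst_X_pow_add D p).dense_compl ℝ).exists_gt a
  have hinj := not_not.1 ht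
  have hdeg (i : σ) : (X i ^ D i + C t * p i).totalDegree ≤ D i := by
    refine (totalDegree_add _ _).trans (max_le (totalDegree_X_pow _ _).le ?_)
    rw [← smul_eq_C_mul]
    exact (totalDegree_smul_le _ _).trans (hp i)
  obtain ⟨x, hx⟩ := exists_eval_eq_zero_of_bijective_powSubst hD
    ⟨hinj, surjective_powSubst_of_injective hdeg hinj⟩
  exact ⟨t, hat, x, fun i ↦ by simpa using hx i⟩

lemma exists_eq_zero_of_forall_exists_norm_le {α F : Type*} [TopologicalSpace α] [CompactSpace α]
    [NormedAddCommGroup F] {f : α → F} (hf : Continuous f) (h : ∀ ε > 0, ∃ a, ‖f a‖ ≤ ε) :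
    ∃ a, f a = 0 := by
  obtain ⟨a₁, -⟩ := h 1 one_pos
  obtain ⟨a, -, ha⟩ := isCompact_univ.exists_isMinOn ⟨a₁, Set.mem_univ a₁⟩ hf.norm.continuousOn
  refine ⟨a, norm_le_zero_iff.1 (le_of_forall_pos_le_add fun ε hε ↦ ?_)⟩
  obtain ⟨b, hb⟩ := h ε hε
  exact (ha (Set.mem_univ b)).trans (by rwa [zero_add])

variable {ι : Type*} [Fintype ι]

lemma exists_mem_sphere_abs_eval_le {D : ι → ℕ} (hD : ∀ i, Odd (D i))
    {H : ι → MvPolynomial (Option ι) ℝ} (hH : ∀ i, (H i).IsHomogeneous (D i)) {ε : ℝ}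
    (hε : 0 < ε) : ∃ u : sphere (0 : EuclideanSpace ℝ (Option ι)) 1,
      ∀ i, |eval u.1 (H i)| ≤ ε := by
  let X' : Option ι → MvPolynomial ι ℝ := fun o ↦ o.elim 1 X
  have hX' (o : Option ι) : (X' o).totalDegree ≤ 1 := by cases o <;> simp [X']
  obtain ⟨t, ht, x, hx⟩ := exists_gt_exists_eval_eq_zero hD
    (fun i ↦ (totalDegree_aeval_le hX' (H i)).trans (hH i).totalDegree_le) ε⁻¹
  have ht0 : 0 < t := (inv_pos.2 hε).trans ht
  let v : EuclideanSpace ℝ (Option ι) := .toLp 2 fun o ↦ o.elim 1 x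
  have hv : v ≠ 0 := fun h ↦ one_ne_zero (congrArg (· none) h)
  have heval (i : ι) : eval x (aeval X' (H i)) = eval v (H i) := by
    rw [← aeval_eq_eval, ← aeval_eq_eval, comp_aeval_apply]
    congr 2
    ext o
    cases o <;> simp [X', v]
  let u := NormedSpace.normalize v
  have hu : ‖u‖ = 1 := NormedSpace.norm_normalize_eq_one_iff.2 hv
  refine ⟨⟨u, mem_sphere_zero_iff_norm.2 hu⟩, fun i ↦ ?_⟩
  have hzero : u (some i) ^ D i + t * eval u (H i) = 0 := by
    have hsmul : eval u (H i) = ‖v‖⁻¹ ^ D i * eval v (H i) :=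
      eval_smul_of_isHomogeneous (hH i) _ _
    have hcoord : u (some i) = ‖v‖⁻¹ * x i := rfl
    rw [hsmul, hcoord, mul_pow, mul_left_comm, ← mul_add, ← heval, hx, mul_zero]
  have hui : |u (some i) ^ D i| ≤ 1 := by
    rw [abs_pow]
    exact pow_le_one₀ (abs_nonneg _) (hu ▸ PiLp.norm_apply_le u (some i))
  calc |eval u (H i)| = |u (some i) ^ D i| / t := by
        rw [eq_neg_of_add_eq_zero_left hzero, abs_neg, abs_mul, abs_of_pos ht0,
          mul_div_cancel_left₀ _ ht0.ne']
    _ ≤ 1 / t := by gcongr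
    _ ≤ ε := by rw [one_div]; exact inv_le_of_inv_le₀ hε ht.le

theorem exists_mem_sphere_eval_eq_zero {D : ι → ℕ} (hD : ∀ i, Odd (D i))
    {H : ι → MvPolynomial (Option ι) ℝ} (hH : ∀ i, (H i).IsHomogeneous (D i)) :
    ∃ u : sphere (0 : EuclideanSpace ℝ (Option ι)) 1, ∀ i, eval u.1 (H i) = 0 := by
  have hcont : Continuous fun (u : sphere (0 : EuclideanSpace ℝ (Option ι)) 1) i ↦
      eval u.1 (H i) :=
    continuous_pi fun i ↦ (continuous_eval _).comp (by fun_prop)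
  obtain ⟨u, hu⟩ := exists_eq_zero_of_forall_exists_norm_le hcont fun ε hε ↦ by
    obtain ⟨u, hu⟩ := exists_mem_sphere_abs_eval_le hD hH hε
    exact ⟨u, (pi_norm_le_iff_of_nonneg hε.le).2 hu⟩
  exact ⟨u, congrFun hu⟩

end RealZeros

section BorsukUlam

/-- Multiplying the odd homogeneous components by powers of `∑ i, X i ^ 2`, which is `1` on the
sphere, brings them to a common degree. -/
lemma exists_isHomogeneous_eval_sub_eval_neg {σ R : Type*} [Fintype σ] [CommRing R]
    (p : MvPolynomial σ R) : ∃ H : MvPolynomial σ R, H.IsHomogeneous (2 * p.totalDegree + 1) ∧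
      ∀ u : σ → R, ∑ i, u i ^ 2 = 1 → eval u p - eval (-u) p = 2 * eval u H := by
  let S : MvPolynomial σ R := ∑ i, X i ^ 2
  have hS : S.IsHomogeneous 2 := .sum _ _ _ fun i _ ↦ isHomogeneous_X_pow i 2
  refine ⟨∑ n ∈ Finset.range (p.totalDegree + 1),
    if Odd n then S ^ (p.totalDegree - n / 2) * homogeneousComponent n p else 0,
    .sum _ _ _ fun n hn ↦ ?_, fun u hu ↦ ?_⟩
  · split_ifs with hodd
    · obtain ⟨m, rfl⟩ := hodd
      convert (hS.pow _).mul (homogeneousComponent_isHomogeneous (2 * m + 1) p) using 1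
      have := Finset.mem_range.1 hn
      omega
    · exact isHomogeneous_zero _ _ _
  · have hSu : eval u S = 1 := by simpa [S] using hu
    have hneg (n : ℕ) : eval (-u) (homogeneousComponent n p) =
        (-1) ^ n * eval u (homogeneousComponent n p) := by
      rw [← eval_smul_of_isHomogeneous (homogeneousComponent_isHomogeneous n p), neg_one_smul]
    conv_lhs => rw [← sum_homogeneousComponent p]
    simp only [map_sum, ← Finset.sum_sub_distrib, Finset.mul_sum, hneg]
    refine Finset.sum_congr rfl fun n _ ↦ ?_
    rcases Nat.even_or_odd n with hn | hn
    · rw [hn.neg_one_pow, if_neg (Nat.not_odd_iff_even.2 hn), map_zero]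
      ring
    · rw [hn.neg_one_pow, if_pos hn, map_mul, map_pow, hSu]
      ring

lemma exists_norm_aeval_sub_lt {α σ : Type*} [TopologicalSpace α] [CompactSpace α]
    {x : σ → C(α, ℝ)} (hx : ∀ a b, (∀ i, x i a = x i b) → a = b) (g : C(α, ℝ)) {ε : ℝ}
    (hε : 0 < ε) : ∃ p : MvPolynomial σ ℝ, ‖aeval x p - g‖ < ε := by
  have hsep : (aeval x : MvPolynomial σ ℝ →ₐ[ℝ] C(α, ℝ)).range.SeparatesPoints := by
    intro a b hab
    obtain ⟨i, hi⟩ : ∃ i, x i a ≠ x i b := by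
      by_contra! h
      exact hab (hx a b h)
    exact ⟨x i, ⟨x i, ⟨X i, aeval_X x i⟩, rfl⟩, hi⟩
  obtain ⟨⟨_, p, rfl⟩, hp⟩ :=
    ContinuousMap.exists_mem_subalgebra_near_continuousMap_of_separatesPoints _ hsep g ε hε
  exact ⟨p, hp⟩

lemma exists_abs_eval_sub_le {σ : Type*} {K : Set (EuclideanSpace ℝ σ)} [CompactSpace K]
    (g : C(K, ℝ)) {ε : ℝ} (hε : 0 < ε) :
    ∃ p : MvPolynomial σ ℝ, ∀ u : K, |eval u.1 p - g u| ≤ ε := by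
  let x : σ → C(K, ℝ) := fun i ↦ ⟨fun u ↦ u.1 i, by fun_prop⟩
  have heval (p : MvPolynomial σ ℝ) (u : K) : aeval x p u = eval u.1 p := by
    rw [← aeval_eq_eval]
    exact comp_aeval_apply x (ContinuousMap.evalAlgHom ℝ ℝ u) p
  obtain ⟨p, hp⟩ := exists_norm_aeval_sub_lt (x := x) (fun u v h ↦ Subtype.ext (PiLp.ext h)) g hε
  exact ⟨p, fun u ↦ heval p u ▸ ((aeval x p - g).norm_coe_le_norm u).trans hp.le⟩

lemma borsuk_ulam_euclideanSpace {ι : Type*} [Fintype ι]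
    (f : C(sphere (0 : EuclideanSpace ℝ (Option ι)) 1, ι → ℝ)) : ∃ u, f (-u) = f u := by
  suffices ∃ u, f (-u) - f u = 0 from this.imp fun u ↦ sub_eq_zero.1
  refine exists_eq_zero_of_forall_exists_norm_le (by fun_prop) fun ε hε ↦ ?_
  choose p hp using fun i ↦ exists_abs_eval_sub_le ((ContinuousMap.eval i).comp f) (half_pos hε)
  choose H hH hHp using fun i ↦ exists_isHomogeneous_eval_sub_eval_neg (p i)
  obtain ⟨u, hu⟩ := exists_mem_sphere_eval_eq_zero (fun _ ↦ odd_two_mul_add_one _) hH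
  refine ⟨u, (pi_norm_le_iff_of_nonneg hε.le).2 fun i ↦ ?_⟩
  have hsq : ∑ o, u.1 o ^ 2 = 1 := by
    rw [← EuclideanSpace.real_norm_sq_eq, norm_eq_of_mem_sphere, one_pow]
  have hpu : eval (-u : sphere (0 : EuclideanSpace ℝ (Option ι)) 1).1 (p i) = eval u.1 (p i) := by
    have := hHp i u.1 hsq
    rw [hu, mul_zero, sub_eq_zero] at this
    exact this.symm
  have h₁ := hp i u
  have h₂ := hp i (-u)
  rw [hpu, abs_sub_comm] at h₂
  calc |f (-u) i - f u i| ≤ |f (-u) i - eval u.1 (p i)| + |eval u.1 (p i) - f u i| :=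
        abs_sub_le _ _ _
    _ ≤ ε / 2 + ε / 2 := add_le_add h₂ h₁
    _ = ε := add_halves ε

lemma exists_continuousMap_sphere_apply_neg {V E : Type*} [NormedAddCommGroup V] [NormedSpace ℝ V]
    [NormedAddCommGroup E] [NormedSpace ℝ E] (e : V →L[ℝ] E) (he : Function.Injective e) :
    ∃ ρ : C(sphere (0 : V) 1, sphere (0 : E) 1), ∀ v, ρ (-v) = -ρ v := by
  have hne (v : sphere (0 : V) 1) : e v ≠ 0 :=
    (map_ne_zero_iff e he).2 (ne_zero_of_mem_unit_sphere v)
  have hcont : Continuous fun v : sphere (0 : V) 1 ↦ e v := by fun_prop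
  refine ⟨⟨fun v ↦ ⟨NormedSpace.normalize (e v),
    mem_sphere_zero_iff_norm.2 (NormedSpace.norm_normalize_eq_one_iff.2 (hne v))⟩,
    ((hcont.norm.inv₀ fun v ↦ norm_ne_zero_iff.2 (hne v)).smul hcont).subtype_mk _⟩,
    fun v ↦ Subtype.ext ?_⟩
  exact (congrArg NormedSpace.normalize (e.map_neg v)).trans (NormedSpace.normalize_neg (e v))

theorem borsuk_ulam {E F : Type*} [NormedAddCommGroup E] [NormedSpace ℝ E]
    [FiniteDimensional ℝ E] [NormedAddCommGroup F] [NormedSpace ℝ F] [FiniteDimensional ℝ F]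
    (hEF : Module.finrank ℝ F < Module.finrank ℝ E) (f : C(sphere (0 : E) 1, F)) :
    ∃ u, f (-u) = f u := by
  obtain ⟨m, hm⟩ := Nat.exists_eq_add_one_of_ne_zero (Nat.ne_zero_of_lt hEF)
  have hE : Module.finrank ℝ (EuclideanSpace ℝ (Option (Fin m))) = Module.finrank ℝ E := by
    simp [hm]
  obtain ⟨j, hj⟩ : ∃ j : F →ₗ[ℝ] Fin m → ℝ, Function.Injective j := by
    rw [← finrank_le_iff_exists_linearMap, Module.finrank_fin_fun]
    lia
  let e := ContinuousLinearEquiv.ofFinrankEq hE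
  obtain ⟨ρ, hρ⟩ := exists_continuousMap_sphere_apply_neg e.toContinuousLinearMap e.injective
  obtain ⟨v, hv⟩ := borsuk_ulam_euclideanSpace
    (.comp ⟨j, j.continuous_of_finiteDimensional⟩ (f.comp ρ))
  exact ⟨ρ v, hρ v ▸ hj hv⟩

end BorsukUlam

section Gap

variable {X : Type*} [NormedAddCommGroup X] [NormedSpace ℝ X] {M N : Submodule ℝ X} {r : ℝ}

lemma exists_continuousMap_norm_sub_lt (h : ∀ x ∈ M, ‖x‖ = 1 → infDist x (N : Set X) < r) :
    ∃ g : C(sphere (0 : M) 1, N), ∀ u : sphere (0 : M) 1, ‖(u : X) - g u‖ < r := by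
  refine exists_continuous_forall_mem_convex_of_local_const
    (t := fun u : sphere (0 : M) 1 ↦ {w : N | ‖(u : X) - w‖ < r}) (fun u ↦ ?_) fun u ↦ ?_
  · have hball : {w : N | ‖(u : X) - w‖ < r} = N.subtype ⁻¹' ball (u : X) r := by
      ext w
      simp [dist_eq_norm, norm_sub_rev]
    rw [hball]
    exact (convex_ball _ _).linear_preimage _
  · obtain ⟨w, hw, huw⟩ := (infDist_lt_iff ⟨0, N.zero_mem⟩).1
      (h u u.1.2 (norm_eq_of_mem_sphere u))
    rw [dist_eq_norm] at huw
    have hcont : Continuous fun v : sphere (0 : M) 1 ↦ ‖(v : X) - w‖ := by fun_prop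
    exact ⟨⟨w, hw⟩, hcont.continuousAt.eventually_lt_const huw⟩

/-- By Borsuk-Ulam, the odd part of a continuous choice of approximations takes a value in `L`. -/
lemma exists_norm_sub_lt_of_finrank_lt [FiniteDimensional ℝ M] [FiniteDimensional ℝ N]
    {L : Submodule ℝ X} (hLN : L ≤ N)
    (hdim : Module.finrank ℝ N < Module.finrank ℝ M + Module.finrank ℝ L)
    (h : ∀ x ∈ M, ‖x‖ = 1 → infDist x (N : Set X) < r) :
    ∃ x ∈ M, ‖x‖ = 1 ∧ ∃ w ∈ L, ‖x - w‖ < r := by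
  obtain ⟨g, hg⟩ := exists_continuousMap_norm_sub_lt h
  let L' := L.comap N.subtype
  have : IsClosed (L' : Set N) := L'.closed_of_finiteDimensional
  have hquot : Module.finrank ℝ (N ⧸ L') < Module.finrank ℝ M := by
    have h₁ := L'.finrank_quotient_add_finrank
    have h₂ : Module.finrank ℝ L' = Module.finrank ℝ L :=
      (Submodule.comapSubtypeEquivOfLe hLN).finrank_eq
    lia
  obtain ⟨u, hu⟩ := borsuk_ulam hquot
    (.comp ⟨L'.mkQ, L'.mkQ.continuous_of_finiteDimensional⟩ g)
  have hmem : g u - g (-u) ∈ L' := (Submodule.Quotient.eq L').1 hu.symm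
  refine ⟨u, u.1.2, norm_eq_of_mem_sphere u, (2⁻¹ : ℝ) • ((g u : X) - g (-u)),
    L.smul_mem _ hmem, ?_⟩
  calc ‖(u : X) - (2⁻¹ : ℝ) • ((g u : X) - g (-u))‖
      = ‖(2⁻¹ : ℝ) • (((u : X) - g u) - (((-u : sphere (0 : M) 1) : X) - g (-u)))‖ := by
        congr 1
        simp only [coe_neg_sphere, Submodule.coe_neg]
        module
    _ ≤ 2⁻¹ * (‖(u : X) - g u‖ + ‖((-u : sphere (0 : M) 1) : X) - g (-u)‖) := by
        rw [norm_smul, Real.norm_of_nonneg (by positivity)]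
        gcongr
        exact norm_sub_le _ _
    _ < r := by linarith [hg u, hg (-u)]

lemma infDist_le_div_one_sub [FiniteDimensional ℝ M] [FiniteDimensional ℝ N]
    (hdim : Module.finrank ℝ N ≤ Module.finrank ℝ M) (hr : r < 1)
    (h : ∀ x ∈ M, ‖x‖ = 1 → infDist x (N : Set X) < r) {y : X} (hyN : y ∈ N) (hy : ‖y‖ = 1) :
    infDist y (M : Set X) ≤ r / (1 - r) := by
  have hy0 : y ≠ 0 := norm_ne_zero_iff.1 (hy ▸ one_ne_zero)
  obtain ⟨x, hxM, hx, w, hw, hxw⟩ := exists_norm_sub_lt_of_finrank_lt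
    ((Submodule.span_singleton_le_iff_mem y N).2 hyN)
    (by rw [finrank_span_singleton hy0]; lia) h
  obtain ⟨a, rfl⟩ := Submodule.mem_span_singleton.1 hw
  have ha : 1 - r < ‖a‖ := by
    have := norm_sub_norm_le x (a • y)
    rw [hx, norm_smul, hy, mul_one] at this
    linarith
  have ha0 : 0 < ‖a‖ := by linarith
  calc infDist y (M : Set X) ≤ ‖y - a⁻¹ • x‖ :=
        (infDist_le_dist_of_mem (M.smul_mem _ hxM)).trans_eq (dist_eq_norm _ _)
    _ = ‖x - a • y‖ / ‖a‖ := by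
        rw [← inv_smul_smul₀ (norm_pos_iff.1 ha0) y, ← smul_sub, norm_smul, norm_inv, norm_sub_rev,
          inv_smul_smul₀ (norm_pos_iff.1 ha0), div_eq_inv_mul]
    _ ≤ r / (1 - r) := div_le_div₀ ((norm_nonneg _).trans hxw.le) hxw.le (by linarith) ha.le

/-- The directed gap `δ(M, N)`: how far the unit sphere of `M` reaches from `N`. It is `0` for
`M = ⊥`, whose unit sphere is empty. -/
noncomputable def directedGap (M N : Submodule ℝ X) : ℝ :=
  sSup {d : ℝ | ∃ x ∈ M, ‖x‖ = 1 ∧ d = infDist x (N : Set X)}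

lemma directedGap_nonneg (M N : Submodule ℝ X) : 0 ≤ directedGap M N := by
  refine Real.sSup_nonneg ?_
  rintro _ ⟨x, -, -, rfl⟩
  exact infDist_nonneg

lemma infDist_le_directedGap {x : X} (hxM : x ∈ M) (hx : ‖x‖ = 1) :
    infDist x (N : Set X) ≤ directedGap M N := by
  refine le_csSup ⟨1, ?_⟩ ⟨x, hxM, hx, rfl⟩
  rintro _ ⟨z, -, hz, rfl⟩
  exact (infDist_le_dist_of_mem N.zero_mem).trans_eq (by rw [dist_zero_right, hz])

theorem stmt_0_general {X : Type*} [NormedAddCommGroup X] [NormedSpace ℝ X]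
    (M N : Submodule ℝ X) [FiniteDimensional ℝ M] [FiniteDimensional ℝ N]
    (hdim : Module.finrank ℝ N ≤ Module.finrank ℝ M) (hlt : directedGap M N < 1) :
    directedGap N M ≤ directedGap M N / (1 - directedGap M N) := by
  have hpos : 0 < 1 - directedGap M N := sub_pos.2 hlt
  refine Real.sSup_le ?_ (div_nonneg (directedGap_nonneg M N) hpos.le)
  rintro _ ⟨y, hyN, hy, rfl⟩
  have hcont : ContinuousAt (fun r : ℝ ↦ r / (1 - r)) (directedGap M N) := by
    fun_prop (disch := exact hpos.ne')
  have hright := hcont.tendsto.mono_left (nhdsWithin_le_nhds (s := Set.Ioi (directedGap M N)))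
  refine ge_of_tendsto hright ?_
  filter_upwards [Ioo_mem_nhdsGT hlt] with r hr
  exact infDist_le_div_one_sub hdim hr.2
    (fun x hxM hx ↦ (infDist_le_directedGap hxM hx).trans_lt hr.1) hyN hy

end Gap

/-- If `M, N` are finite-dimensional (hence closed) subspaces of a Banach space `X`
with `dim M = dim N` and `δ(M,N) < 1`, then `δ(N,M) ≤ δ(M,N)/(1 - δ(M,N))`,
where `δ(M,N) = sup_{x ∈ M, ‖x‖=1} dist(x, N)`. -/
theorem stmt_0 {X : Type*} [NormedAddCommGroup X] [NormedSpace ℝ X] [CompleteSpace X]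
    (M N : Submodule ℝ X) [FiniteDimensional ℝ M] [FiniteDimensional ℝ N]
    (hdim : Module.finrank ℝ M = Module.finrank ℝ N)
    (δMN δNM : ℝ)
    (hδMN : δMN = sSup {d : ℝ | ∃ x ∈ M, ‖x‖ = 1 ∧ d = Metric.infDist x (N : Set X)})
    (hδNM : δNM = sSup {d : ℝ | ∃ x ∈ N, ‖x‖ = 1 ∧ d = Metric.infDist x (M : Set X)})
    (hlt : δMN < 1) :
    δNM ≤ δMN / (1 - δMN) := by
  subst hδMN hδNM
  exact stmt_0_general M N hdim.ge hlt
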